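/- arXiv:2408.02264 — 2 statements merged into one kernel-verified Lean document; each statement's English description precedes it below -/
import Mathlib

section
/- Let m > 1 be an integer and 0 < δ < 1. For x ∈ ℕ let S_x be the set of positive integers n ≤ x having a prime factor p with p > (log x)^{1+δ} and gcd((p−1)/2, m) = 1. Then |S_x|/x → 1 as x → ∞. -/
/-!
Put `a = -1` in `ZMod (2 * m)`. A prime `p ≡ a` has `(p - 1) / 2 + 1` divisible by `m`, so
`(p - 1) / 2` is coprime to `m`; it therefore suffices that almost every `n ≤ x` has a prime factor
`p ≡ a` with `p > (log x) ^ 2`. Let `ω n` be the number of such prime factors `p ≤ x`, and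
`E = ∑ 1 / p` over these primes. Expanding `∑ (ω n - E) ^ 2` over `n ≤ x` bounds it by `3 * x * E`,
so at most `3 * x / E` integers have `ω n = 0` (`second_moment_bound`).

What remains is that `E → ∞` (`eventually_prime_reciprocal_ge`). Mere divergence of `∑ 1 / p` over
`p ≡ a` would not be enough, since the primes up to `(log x) ^ 2` are left out. The nonvanishing of
Dirichlet L-functions on `re s = 1`, in Mathlib's form that `∑ Λ n / n ^ s` over `n ≡ a` is
`c / (s - 1) + O(1)` as `s ↓ 1`, gives more: comparing this estimate at three values of `s` shows
`∑ log p / p ≥ c ℓ` over the primes `p ≡ a` in `(exp ℓ, exp (40 ℓ)]` (`sum_middle_range_ge`), so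
each such interval contributes at least a fixed amount to `∑ 1 / p`. The number of such intervals
that fit between `(log x) ^ 2` and `x` tends to infinity.
-/

open Filter

/-! ### A second moment inequality -/

/-- A Turán–Kubilius inequality for the number of prime divisors in a finite set `P`, in the form
of an upper bound for the number of `n ≤ x` that no element of `P` divides. -/
lemma second_moment_bound (x : ℕ) (P : Finset ℕ) (hP : ∀ p ∈ P, p.Prime ∧ p ≤ x) :
    (∑ p ∈ P, (1 / p : ℝ)) ^ 2 * ((Finset.Ioc 0 x).filter (fun n => ∀ p ∈ P, ¬ p ∣ n)).card
      ≤ 3 * x * ∑ p ∈ P, (1 / p : ℝ) := by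
  classical
  set E : ℝ := ∑ p ∈ P, (1 / p : ℝ) with hE
  have hE0 : 0 ≤ E := Finset.sum_nonneg fun p _ => by positivity
  let ω : ℕ → ℝ := fun n => ∑ p ∈ P, if p ∣ n then (1 : ℝ) else 0
  have hcount (d : ℕ) : ∑ n ∈ Finset.Ioc 0 x, (if d ∣ n then (1 : ℝ) else 0) = (x / d : ℕ) := by
    rw [Finset.sum_boole, Nat.Ioc_filter_dvd_card_eq_div]
  have hcard : (P.card : ℝ) ≤ x := by
    have : P ⊆ Finset.Ioc 0 x := fun p hp =>
      Finset.mem_Ioc.2 ⟨(hP p hp).1.pos, (hP p hp).2⟩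
    simpa using Finset.card_le_card this
  have h1 : x * E - x ≤ ∑ n ∈ Finset.Ioc 0 x, ω n := by
    have : x * E - P.card ≤ ∑ n ∈ Finset.Ioc 0 x, ω n := by
      rw [Finset.sum_comm, hE, Finset.mul_sum, Finset.card_eq_sum_ones, Nat.cast_sum,
        ← Finset.sum_sub_distrib]
      refine Finset.sum_le_sum fun p _ => ?_
      rw [hcount, ← Nat.floor_div_eq_div (K := ℝ)]
      have := Nat.lt_floor_add_one ((x : ℝ) / p)
      rw [mul_one_div]; push_cast; linarith
    linarith
  have h2 : ∑ n ∈ Finset.Ioc 0 x, ω n ^ 2 ≤ x * E ^ 2 + x * E := by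
    have hpq : ∀ p ∈ P, ∀ r ∈ P, ∑ n ∈ Finset.Ioc 0 x,
        (if p ∣ n then (1 : ℝ) else 0) * (if r ∣ n then (1 : ℝ) else 0)
          ≤ x * ((1 / p) * (1 / r)) + if p = r then x * (1 / p : ℝ) else 0 := by
      intro p hp r hr
      by_cases h : p = r
      · subst h
        simp only [mul_ite, mul_one, mul_zero, if_true, ← ite_and, and_self]
        rw [hcount]
        have := Nat.cast_div_le (α := ℝ) (m := x) (n := p)
        have : (0 : ℝ) ≤ x * (1 / p * (1 / p)) := by positivity
        rw [mul_one_div (x : ℝ) (p : ℝ)]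
        linarith
      · have hc : Nat.Coprime p r := (Nat.coprime_primes (hP p hp).1 (hP r hr).1).2 h
        have : ∀ n, (if p ∣ n then (1 : ℝ) else 0) * (if r ∣ n then (1 : ℝ) else 0)
            = if p * r ∣ n then 1 else 0 := by
          intro n
          have : p * r ∣ n ↔ p ∣ n ∧ r ∣ n :=
            ⟨fun hd => ⟨(Nat.dvd_mul_right p r).trans hd, (Nat.dvd_mul_left r p).trans hd⟩,
              fun hd => hc.mul_dvd_of_dvd_of_dvd hd.1 hd.2⟩
          simp only [this]
          split_ifs <;> simp_all
        simp only [this, hcount, h, if_false, add_zero]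
        have := Nat.cast_div_le (α := ℝ) (m := x) (n := p * r)
        refine this.trans (le_of_eq ?_)
        push_cast
        rw [one_div_mul_one_div, mul_one_div]
    calc ∑ n ∈ Finset.Ioc 0 x, ω n ^ 2
        = ∑ p ∈ P, ∑ r ∈ P, ∑ n ∈ Finset.Ioc 0 x,
          (if p ∣ n then (1 : ℝ) else 0) * (if r ∣ n then (1 : ℝ) else 0) := by
          simp only [ω, sq, Finset.sum_mul_sum]
          rw [Finset.sum_comm]
          exact Finset.sum_congr rfl fun p _ => Finset.sum_comm
      _ ≤ ∑ p ∈ P, ∑ r ∈ P, (x * ((1 / p) * (1 / r)) + if p = r then x * (1 / p : ℝ) else 0) :=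
          Finset.sum_le_sum fun p hp => Finset.sum_le_sum fun r hr => hpq p hp r hr
      _ = x * E ^ 2 + x * E := by
          simp only [Finset.sum_add_distrib, Finset.sum_ite_eq, ← Finset.mul_sum, hE, sq,
            Finset.sum_mul_sum]
          congr 1
          rw [Finset.mul_sum]
          exact Finset.sum_congr rfl fun p hp => by simp [hp]
  -- Each `n` counted on the left has `ω n = 0`, so it contributes `E ^ 2` to the second moment.
  have h3 : E ^ 2 * ((Finset.Ioc 0 x).filter (fun n => ∀ p ∈ P, ¬ p ∣ n)).card
      ≤ ∑ n ∈ Finset.Ioc 0 x, (ω n - E) ^ 2 := by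
    calc _ = ∑ n ∈ (Finset.Ioc 0 x).filter (fun n => ∀ p ∈ P, ¬ p ∣ n), (ω n - E) ^ 2 := by
          rw [mul_comm, ← nsmul_eq_mul, ← Finset.sum_const]
          refine Finset.sum_congr rfl fun n hn => ?_
          have : ω n = 0 := Finset.sum_eq_zero fun p hp => if_neg ((Finset.mem_filter.1 hn).2 p hp)
          rw [this]; ring
      _ ≤ _ := Finset.sum_le_sum_of_subset_of_nonneg (Finset.filter_subset _ _)
          fun _ _ _ => sq_nonneg _
  have h4 : ∑ n ∈ Finset.Ioc 0 x, (ω n - E) ^ 2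
      = ∑ n ∈ Finset.Ioc 0 x, ω n ^ 2 - 2 * E * ∑ n ∈ Finset.Ioc 0 x, ω n + x * E ^ 2 := by
    simp only [sub_sq, Finset.sum_add_distrib, Finset.sum_sub_distrib, Finset.mul_sum]
    simp [mul_assoc, mul_comm, mul_left_comm]
  nlinarith [mul_le_mul_of_nonneg_left h1 hE0]

/-! ### Two-sided bounds for the Dirichlet series of a residue class -/

open ArithmeticFunction.vonMangoldt in
/-- The two-sided version of
`ArithmeticFunction.vonMangoldt.LSeries_residueClass_lower_bound`: apart from its pole at `1`, the
series extends continuously to the compact interval `[1, 2]`. -/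
lemma residueClass_series_bounds {q : ℕ} [NeZero q] {a : ZMod q} (ha : IsUnit a) :
    ∃ c C : ℝ, 0 < c ∧ ∀ η : ℝ, 0 < η → η ≤ 1 →
      c / η - C ≤ ∑' n : ℕ, residueClass a n / (n : ℝ) ^ (1 + η) ∧
      ∑' n : ℕ, residueClass a n / (n : ℝ) ^ (1 + η) ≤ c / η + C := by
  have H {x : ℝ} (hx : 1 < x) :
      ∑' n, residueClass a n / (n : ℝ) ^ x =
        (LFunctionResidueClassAux a x).re + (q.totient : ℝ)⁻¹ / (x - 1) := by
    refine Complex.ofReal_injective ?_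
    simp only [Complex.ofReal_tsum, Complex.ofReal_div, Complex.ofReal_cpow (Nat.cast_nonneg _),
      Complex.ofReal_natCast, Complex.ofReal_add, Complex.ofReal_inv, Complex.ofReal_sub,
      Complex.ofReal_one]
    simp_rw [← LFunctionResidueClassAux_real ha hx,
      eqOn_LFunctionResidueClassAux ha <| Set.mem_ofPred.mpr (Complex.ofReal_re x ▸ hx),
      sub_add_cancel, LSeries, LSeries.term]
    refine tsum_congr fun n ↦ ?_
    split_ifs with hn
    · simp only [hn, residueClass_apply_zero, Complex.ofReal_zero, zero_div]
    · rfl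
  have hcont : ContinuousOn (fun x : ℝ ↦ (LFunctionResidueClassAux a x).re) (Set.Icc 1 2) :=
    Complex.continuous_re.continuousOn.comp (t := Set.univ)
      (continuousOn_LFunctionResidueClassAux a) (fun ⦃x⦄ a ↦ trivial) |>.comp
      Complex.continuous_ofReal.continuousOn fun x hx ↦ by
        simpa only [Set.mem_ofPred_eq, Complex.ofReal_re] using hx.1
  obtain ⟨C, hC⟩ := isCompact_Icc.exists_bound_of_continuousOn hcont
  refine ⟨(q.totient : ℝ)⁻¹, C, inv_pos.mpr (mod_cast q.totient.pos_of_neZero),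
    fun η h0 h1 => ?_⟩
  have hb := abs_le.1 (hC (1 + η) ⟨by linarith, by linarith⟩)
  rw [H (by linarith : 1 < 1 + η), add_sub_cancel_left]
  constructor <;> linarith

open ArithmeticFunction.vonMangoldt in
/-- The bounds of `residueClass_series_bounds` persist for the sum over primes only, because the
proper prime powers contribute a bounded amount. -/
lemma prime_series_bounds {q : ℕ} [NeZero q] {a : ZMod q} (ha : IsUnit a) :
    ∃ c C : ℝ, 0 < c ∧ ∀ η : ℝ, 0 < η → η ≤ 1 →
      Summable (fun n : ℕ => (if n.Prime then residueClass a n else 0) / (n : ℝ) ^ (1 + η)) ∧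
      c / η - C ≤ ∑' n : ℕ, (if n.Prime then residueClass a n else 0) / (n : ℝ) ^ (1 + η) ∧
      ∑' n : ℕ, (if n.Prime then residueClass a n else 0) / (n : ℝ) ^ (1 + η) ≤ c / η + C := by
  obtain ⟨c, C, hc, h⟩ := residueClass_series_bounds ha
  set N : ℝ := ∑' n : ℕ, (if n.Prime then 0 else residueClass a n) / n with hN
  have hN0 : 0 ≤ N := tsum_nonneg fun n => by
    have := residueClass_nonneg a n
    positivity
  refine ⟨c, C + N, hc, fun η h0 h1 => ?_⟩
  obtain ⟨hl, hu⟩ := h η h0 h1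
  have hS : Summable fun n : ℕ => residueClass a n / (n : ℝ) ^ (1 + η) :=
    LSeries.summable_real_of_abscissaOfAbsConv_lt <|
      (abscissaOfAbsConv_residueClass_le_one a).trans_lt <| by
        exact_mod_cast (by linarith : (1 : ℝ) < 1 + η)
  have hP : Summable (fun n : ℕ =>
      (if n.Prime then residueClass a n else 0) / (n : ℝ) ^ (1 + η)) := by
    refine Summable.of_nonneg_of_le (fun n => ?_) (fun n => ?_) hS
    · have := residueClass_nonneg a n
      positivity
    · have := residueClass_nonneg a n
      gcongr
      split_ifs <;> simp [this]
  have hle : ∀ n : ℕ, (if n.Prime then 0 else residueClass a n) / (n : ℝ) ^ (1 + η) ≤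
      (if n.Prime then 0 else residueClass a n) / (n : ℝ) := by
    intro n
    rcases n.eq_zero_or_pos with rfl | hn
    · simp
    · have := residueClass_nonneg a n
      refine div_le_div_of_nonneg_left (by positivity) (mod_cast hn) ?_
      conv_lhs => rw [← Real.rpow_one n]
      exact Real.rpow_le_rpow_of_exponent_le (by exact_mod_cast hn) (by linarith)
  have hQ : Summable (fun n : ℕ =>
      (if n.Prime then 0 else residueClass a n) / (n : ℝ) ^ (1 + η)) := by
    refine Summable.of_nonneg_of_le (fun n => ?_) hle (summable_residueClass_non_primes_div a)
    have := residueClass_nonneg a n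
    positivity
  have hQN := hQ.tsum_le_tsum hle (summable_residueClass_non_primes_div a)
  have hQ0 : 0 ≤ ∑' n : ℕ, (if n.Prime then 0 else residueClass a n) / (n : ℝ) ^ (1 + η) :=
    tsum_nonneg fun n => by
      have := residueClass_nonneg a n
      positivity
  have hadd := hP.tsum_add hQ
  have : (fun n : ℕ => (if n.Prime then residueClass a n else 0) / (n : ℝ) ^ (1 + η) +
      (if n.Prime then 0 else residueClass a n) / (n : ℝ) ^ (1 + η))
      = fun n : ℕ => residueClass a n / (n : ℝ) ^ (1 + η) := by
    ext n; split_ifs <;> simp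
  rw [this] at hadd
  exact ⟨hP, by linarith, by linarith⟩

/-! ### Primes in a residue class between `exp ℓ` and `exp (40 ℓ)` -/

/-- If `∑ w n / n ^ (1 + η) = c / η + O(1)` as `η ↓ 0`, then `∑ w n / n` over
`(exp ℓ, exp (40 ℓ)]` is at least `c ℓ` for large `ℓ`. The series at `η = 1 / (5 ℓ)` is about
`5 c ℓ`. Its terms with `n ≤ exp ℓ` are at most `e` times those at `η = 1 / ℓ`, hence sum to about
`e c ℓ` at most, and its terms with `n > exp (40 ℓ)` are at most `exp (-4)` times those at
`η = 1 / (10 ℓ)`, hence sum to about `10 exp (-4) c ℓ` at most. -/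
lemma sum_middle_range_ge {w : ℕ → ℝ} (hw : ∀ n, 0 ≤ w n) {c C : ℝ} (hc : 0 < c)
    (h : ∀ η : ℝ, 0 < η → η ≤ 1 → Summable (fun n : ℕ => w n / (n : ℝ) ^ (1 + η)) ∧
      c / η - C ≤ ∑' n : ℕ, w n / (n : ℝ) ^ (1 + η) ∧
      ∑' n : ℕ, w n / (n : ℝ) ^ (1 + η) ≤ c / η + C) :
    ∃ ℓ₀ : ℝ, 1 ≤ ℓ₀ ∧ ∀ ℓ : ℝ, ℓ₀ ≤ ℓ →
      c * ℓ ≤ ∑ n ∈ Finset.Ioc ⌊Real.exp ℓ⌋₊ ⌊Real.exp (40 * ℓ)⌋₊, w n / n := by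
  refine ⟨max 1 (5 * |C| / c), le_max_left _ _, fun ℓ hℓ => ?_⟩
  have hℓ1 : 1 ≤ ℓ := (le_max_left _ _).trans hℓ
  have hℓ2 : 5 * |C| ≤ c * ℓ := by
    have := (le_max_right _ _).trans hℓ
    rw [div_le_iff₀ hc] at this
    linarith
  have hℓ0 : 0 < ℓ := by linarith
  have small : ∀ k : ℝ, 1 ≤ k → 0 < 1 / (k * ℓ) ∧ 1 / (k * ℓ) ≤ 1 := fun k hk => by
    have : 1 ≤ k * ℓ := one_le_mul_of_one_le_of_one_le hk hℓ1
    exact ⟨by positivity, by rw [div_le_one] <;> linarith⟩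
  obtain ⟨S1, -, U1⟩ := h (1 / (1 * ℓ)) (small 1 (by norm_num)).1 (small 1 (by norm_num)).2
  obtain ⟨S5, L5, -⟩ := h (1 / (5 * ℓ)) (small 5 (by norm_num)).1 (small 5 (by norm_num)).2
  obtain ⟨S10, -, U10⟩ := h (1 / (10 * ℓ)) (small 10 (by norm_num)).1 (small 10 (by norm_num)).2
  set I := Finset.Ioc ⌊Real.exp ℓ⌋₊ ⌊Real.exp (40 * ℓ)⌋₊ with hI
  have hmid : HasSum (fun n : ℕ => if n ∈ I then w n / n else 0) (∑ n ∈ I, w n / n) := by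
    have := hasSum_sum_of_ne_finset_zero (f := fun n : ℕ => if n ∈ I then w n / n else 0) (s := I)
      (L := SummationFilter.unconditional ℕ)
      (fun n hn => if_neg hn)
    convert! this using 1
    exact Finset.sum_congr rfl fun n hn => (if_pos hn).symm
  have hpt : ∀ n : ℕ, w n / (n : ℝ) ^ (1 + 1 / (5 * ℓ)) ≤
      Real.exp 1 * (w n / (n : ℝ) ^ (1 + 1 / (1 * ℓ))) + (if n ∈ I then w n / n else 0)
        + Real.exp (-4) * (w n / (n : ℝ) ^ (1 + 1 / (10 * ℓ))) := by
    intro n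
    have hwn := hw n
    have t1 : 0 ≤ Real.exp 1 * (w n / (n : ℝ) ^ (1 + 1 / (1 * ℓ))) := by positivity
    have t2 : (0 : ℝ) ≤ if n ∈ I then w n / n else 0 := by positivity
    have t3 : 0 ≤ Real.exp (-4) * (w n / (n : ℝ) ^ (1 + 1 / (10 * ℓ))) := by positivity
    rcases n.eq_zero_or_pos with rfl | hn
    · rw [Nat.cast_zero, Real.zero_rpow (by have := (small 5 (by norm_num)).1; linarith),
        div_zero]
      positivity
    have hn' : (0 : ℝ) < n := by exact_mod_cast hn
    have hn1 : (1 : ℝ) ≤ n := by exact_mod_cast hn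
    have hlog0 : 0 ≤ Real.log n := Real.log_nonneg hn1
    -- All powers of `n` are put in the form `exp (_ * log n)`.
    have key : ∀ e : ℝ, w n / (n : ℝ) ^ (1 + e) = w n / n * Real.exp (-(e * Real.log n)) := by
      intro e
      rw [Real.rpow_add hn', Real.rpow_one, Real.rpow_def_of_pos hn', Real.exp_neg,
        mul_comm (Real.log _)]
      field_simp
    have hwn' : 0 ≤ w n / n := by positivity
    by_cases hA : (n : ℝ) ≤ Real.exp ℓ
    · have hl : Real.log n ≤ ℓ := (Real.log_le_iff_le_exp hn').2 hA
      refine le_trans ?_ (by linarith :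
        Real.exp 1 * (w n / (n : ℝ) ^ (1 + 1 / (1 * ℓ))) ≤ _)
      rw [key, key, mul_left_comm, ← Real.exp_add]
      refine mul_le_mul_of_nonneg_left (Real.exp_le_exp.2 ?_) hwn'
      have : 1 / (1 * ℓ) * Real.log n ≤ 1 := by
        rw [one_mul, one_div_mul_eq_div, div_le_one hℓ0]; exact hl
      have : 0 ≤ 1 / (5 * ℓ) * Real.log n := by positivity
      linarith
    by_cases hB : (n : ℝ) ≤ Real.exp (40 * ℓ)
    · have hm : n ∈ I := by
        rw [hI, Finset.mem_Ioc]
        exact ⟨(Nat.floor_lt (Real.exp_pos _).le).2 (not_le.1 hA), Nat.le_floor hB⟩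
      refine le_trans ?_ (by linarith : (if n ∈ I then w n / n else 0) ≤ _)
      rw [if_pos hm, key]
      refine mul_le_of_le_one_right hwn' (Real.exp_le_one_iff.2 ?_)
      have : 0 ≤ 1 / (5 * ℓ) * Real.log n := by positivity
      linarith
    · have hl : 40 * ℓ ≤ Real.log n := (Real.le_log_iff_exp_le hn').2 (not_le.1 hB).le
      refine le_trans ?_ (by linarith :
        Real.exp (-4) * (w n / (n : ℝ) ^ (1 + 1 / (10 * ℓ))) ≤ _)
      rw [key, key, mul_left_comm, ← Real.exp_add]
      refine mul_le_mul_of_nonneg_left (Real.exp_le_exp.2 ?_) hwn'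
      have e : 1 / (5 * ℓ) * Real.log n = 2 * (1 / (10 * ℓ) * Real.log n) := by
        field_simp; ring
      have : 4 ≤ 1 / (10 * ℓ) * Real.log n := by
        rw [one_div_mul_eq_div, le_div_iff₀ (by positivity)]; linarith
      linarith
  have hsum := S5.tsum_le_tsum hpt
    (((S1.mul_left _).add hmid.summable).add (S10.mul_left _))
  rw [((S1.mul_left _).add hmid.summable).tsum_add (S10.mul_left _),
    (S1.mul_left _).tsum_add hmid.summable, tsum_mul_left, tsum_mul_left, hmid.tsum_eq] at hsum
  rw [div_div_eq_mul_div, div_one] at U1 L5 U10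
  have he1 : Real.exp 1 < 2.72 := Real.exp_one_lt_d9.trans (by norm_num)
  have he4 : Real.exp (-4) ≤ 1 / 50 := by
    rw [Real.exp_neg, ← one_div]
    refine one_div_le_one_div_of_le (by norm_num) ?_
    have : Real.exp 4 = Real.exp 1 ^ 4 := by rw [← Real.exp_nat_mul]; norm_num
    rw [this]
    calc (50 : ℝ) ≤ 2.7 ^ 4 := by norm_num
      _ ≤ _ := by
        gcongr
        exact (by norm_num : (2.7 : ℝ) ≤ 2.7182818283).trans Real.exp_one_gt_d9.le
  have hCa := le_abs_self C
  have hCn := abs_nonneg C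
  have hcl : 0 < c * ℓ := by positivity
  have B1 : Real.exp 1 * ∑' n : ℕ, w n / (n : ℝ) ^ (1 + 1 / (1 * ℓ)) ≤ 2.72 * (c * ℓ + |C|) :=
    mul_le_mul he1.le (by linarith) (tsum_nonneg fun n => by have := hw n; positivity)
      (by norm_num)
  have B10 : Real.exp (-4) * ∑' n : ℕ, w n / (n : ℝ) ^ (1 + 1 / (10 * ℓ))
      ≤ 1 / 50 * (10 * (c * ℓ) + |C|) :=
    mul_le_mul he4 (by linarith) (tsum_nonneg fun n => by have := hw n; positivity)
      (by norm_num)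
  linarith

/-- Since `log p ≤ 40 ℓ` on `(exp ℓ, exp (40 ℓ)]`, the bound for `∑ log p / p` there gives a bound
for `∑ 1 / p` that does not depend on `ℓ`. -/
lemma prime_reciprocal_block {q : ℕ} [NeZero q] {a : ZMod q} (ha : IsUnit a) :
    ∃ d ℓ₀ : ℝ, 0 < d ∧ 1 ≤ ℓ₀ ∧ ∀ ℓ : ℝ, ℓ₀ ≤ ℓ →
      d ≤ ∑ p ∈ (Finset.Ioc ⌊Real.exp ℓ⌋₊ ⌊Real.exp (40 * ℓ)⌋₊).filter
        (fun p : ℕ => p.Prime ∧ (p : ZMod q) = a), (1 / p : ℝ) := by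
  obtain ⟨c, C, hc, h⟩ := prime_series_bounds ha
  obtain ⟨ℓ₀, h1, hℓ₀⟩ := sum_middle_range_ge (fun n => by
    have := ArithmeticFunction.vonMangoldt.residueClass_nonneg a n
    positivity) hc h
  refine ⟨c / 40, ℓ₀, by positivity, h1, fun ℓ hℓ => ?_⟩
  have hℓ0 : 0 < ℓ := by linarith
  have hle : ∑ n ∈ Finset.Ioc ⌊Real.exp ℓ⌋₊ ⌊Real.exp (40 * ℓ)⌋₊,
      (if n.Prime then ArithmeticFunction.vonMangoldt.residueClass a n else 0) / (n : ℝ) ≤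
      40 * ℓ * ∑ p ∈ (Finset.Ioc ⌊Real.exp ℓ⌋₊ ⌊Real.exp (40 * ℓ)⌋₊).filter
        (fun p : ℕ => p.Prime ∧ (p : ZMod q) = a), (1 / p : ℝ) := by
    rw [Finset.mul_sum, Finset.sum_filter]
    refine Finset.sum_le_sum fun n hn => ?_
    by_cases hp : n.Prime
    · by_cases hna : (n : ZMod q) = a
      · rw [if_pos hp, if_pos ⟨hp, hna⟩, ← div_eq_mul_one_div]
        refine div_le_div_of_nonneg_right ?_ n.cast_nonneg
        refine (ArithmeticFunction.vonMangoldt.residueClass_le a n).trans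
          (ArithmeticFunction.vonMangoldt_le_log.trans ?_)
        rw [Real.log_le_iff_le_exp (by exact_mod_cast hp.pos)]
        exact (Nat.le_floor_iff (Real.exp_pos _).le).1 (Finset.mem_Ioc.1 hn).2
      · have hmem : n ∉ {n : ℕ | (n : ZMod q) = a} := hna
        rw [if_pos hp, if_neg (fun h => hna h.2),
          ArithmeticFunction.vonMangoldt.residueClass, Set.indicator_of_notMem hmem, zero_div]
    · rw [if_neg hp, if_neg (fun h => hp h.1), zero_div]
  have := (hℓ₀ ℓ hℓ).trans hle
  rw [div_le_iff₀ (by norm_num)]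
  nlinarith

lemma prime_reciprocal_iterated {q : ℕ} [NeZero q] {a : ZMod q} (ha : IsUnit a) :
    ∃ d ℓ₀ : ℝ, 0 < d ∧ 1 ≤ ℓ₀ ∧ ∀ k : ℕ, ∀ ℓ : ℝ, ℓ₀ ≤ ℓ →
      k * d ≤ ∑ p ∈ (Finset.Ioc ⌊Real.exp ℓ⌋₊ ⌊Real.exp (40 ^ k * ℓ)⌋₊).filter
        (fun p : ℕ => p.Prime ∧ (p : ZMod q) = a), (1 / p : ℝ) := by
  obtain ⟨d, ℓ₀, hd, h1, h⟩ := prime_reciprocal_block ha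
  refine ⟨d, ℓ₀, hd, h1, fun k ℓ hℓ => ?_⟩
  induction k with
  | zero => simp
  | succ k ih =>
    have hk : (1 : ℝ) ≤ 40 ^ k := one_le_pow₀ (by norm_num)
    have hkℓ : ℓ ≤ 40 ^ k * ℓ := le_mul_of_one_le_left (by linarith) hk
    have hnext := h (40 ^ k * ℓ) (hℓ.trans hkℓ)
    rw [← mul_assoc, ← pow_succ'] at hnext
    have hsucc : (40 : ℝ) ^ k * ℓ ≤ 40 ^ (k + 1) * ℓ := by
      rw [pow_succ]; nlinarith
    rw [Finset.sum_filter] at ih hnext ⊢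
    rw [← Finset.sum_Ioc_consecutive _ (Nat.floor_le_floor (Real.exp_le_exp.2 hkℓ))
      (Nat.floor_le_floor (Real.exp_le_exp.2 hsucc))]
    push_cast
    linarith

/-! ### Primes in a residue class between `(log x) ^ 2` and `x` -/

/-- For every `k`, `exp (40 ^ k * ℓ) ≤ x` eventually holds with `ℓ = 2 log log x`, which is the
value with `exp ℓ = (log x) ^ 2`; so `k` consecutive blocks fit into the range. -/
lemma eventually_prime_reciprocal_ge {q : ℕ} [NeZero q] {a : ZMod q} (ha : IsUnit a) (K : ℝ) :
    ∀ᶠ x : ℕ in atTop, K ≤ ∑ p ∈ (Finset.Ioc ⌊Real.log x ^ 2⌋₊ x).filter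
        (fun p : ℕ => p.Prime ∧ (p : ZMod q) = a), (1 / p : ℝ) := by
  obtain ⟨d, ℓ₀, hd, h1, h⟩ := prime_reciprocal_iterated ha
  obtain ⟨k, hk⟩ := exists_nat_ge (K / d)
  rw [div_le_iff₀ hd] at hk
  have hlog : Tendsto (fun x : ℕ => Real.log x) atTop atTop :=
    Real.tendsto_log_atTop.comp tendsto_natCast_atTop_atTop
  have hll : Tendsto (fun x : ℕ => Real.log (Real.log x)) atTop atTop :=
    Real.tendsto_log_atTop.comp hlog
  have hsmall : ∀ᶠ x : ℕ in atTop,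
      ‖Real.log (Real.log x)‖ ≤ 1 / (40 ^ k * 2) * ‖Real.log x‖ :=
    hlog.eventually (Real.isLittleO_log_id_atTop.bound (by positivity))
  filter_upwards [hsmall, hll.eventually_ge_atTop ℓ₀, hlog.eventually_gt_atTop 0,
    eventually_gt_atTop 0] with x hx hx1 hx2 hx0
  have hx0' : (0 : ℝ) < x := by exact_mod_cast hx0
  rw [Real.norm_of_nonneg (by linarith), Real.norm_of_nonneg hx2.le, one_div_mul_eq_div,
    le_div_iff₀ (by positivity)] at hx
  have hk2 := h k (2 * Real.log (Real.log x)) (by linarith)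
  have e1 : Real.exp (2 * Real.log (Real.log x)) = Real.log x ^ 2 := by
    rw [two_mul, Real.exp_add, Real.exp_log hx2, sq]
  have e2 : ⌊Real.exp (40 ^ k * (2 * Real.log (Real.log x)))⌋₊ ≤ x := by
    have : Real.exp (40 ^ k * (2 * Real.log (Real.log x))) ≤ x := by
      rw [← Real.le_log_iff_exp_le hx0']; linarith
    exact Nat.floor_le_of_le this
  rw [e1] at hk2
  refine hk.trans (hk2.trans (Finset.sum_le_sum_of_subset_of_nonneg ?_
    fun _ _ _ => by positivity))
  exact Finset.filter_subset_filter _ (Finset.Ioc_subset_Ioc_right e2)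

lemma gcd_half_pred_eq_one {m p : ℕ} (hp : p.Prime)
    (h : (p : ZMod (2 * m)) = -1) : Nat.gcd ((p - 1) / 2) m = 1 := by
  have h0 : ((p + 1 : ℕ) : ZMod (2 * m)) = 0 := by push_cast; rw [h]; ring
  obtain ⟨j, hj⟩ := (ZMod.natCast_eq_zero_iff _ _).1 h0
  have hpos := hp.pos
  have hdiv : (p - 1) / 2 + 1 = m * j := by
    rw [mul_assoc] at hj
    omega
  have : Nat.Coprime ((p - 1) / 2) ((p - 1) / 2 + 1) := by simp
  rw [hdiv] at this
  exact this.coprime_mul_right_right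

/-! ### Almost all integers have a large prime factor of the required form -/

theorem stmt17 (m : ℕ) (hm : 1 < m) (δ : ℝ) (hδ0 : 0 < δ) (hδ1 : δ < 1) :
    Tendsto (fun x : ℕ =>
        (({n : ℕ | 1 ≤ n ∧ n ≤ x ∧ ∃ p : ℕ, p.Prime ∧ p ∣ n ∧
            (p : ℝ) > Real.log x ^ (1 + δ) ∧ Nat.gcd ((p - 1) / 2) m = 1}.ncard : ℝ)) / x)
      atTop (nhds 1) := by
  classical
  have : NeZero (2 * m) := ⟨by omega⟩
  have hunit : IsUnit (-1 : ZMod (2 * m)) := isUnit_one.neg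
  have hlog : Tendsto (fun x : ℕ => Real.log x) atTop atTop :=
    Real.tendsto_log_atTop.comp tendsto_natCast_atTop_atTop
  have hsub : ∀ x : ℕ, {n : ℕ | 1 ≤ n ∧ n ≤ x ∧ ∃ p : ℕ, p.Prime ∧ p ∣ n ∧
      (p : ℝ) > Real.log x ^ (1 + δ) ∧ Nat.gcd ((p - 1) / 2) m = 1} ⊆ Finset.Ioc 0 x :=
    fun x n hn => by simpa using ⟨hn.1, hn.2.1⟩
  rw [tendsto_order]
  constructor
  · intro b hb
    -- Once `K ≤ E`, at most `3 * x / K < (1 - b) * x` integers up to `x` are missed.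
    obtain ⟨K, hK⟩ := exists_gt (max 1 (3 / (1 - b)))
    have hK1 : 1 < K := (le_max_left _ _).trans_lt hK
    have hK3 : 3 < K * (1 - b) :=
      (div_lt_iff₀ (by linarith)).1 ((le_max_right _ _).trans_lt hK)
    filter_upwards [eventually_prime_reciprocal_ge hunit K, hlog.eventually_ge_atTop 1,
      eventually_gt_atTop 0] with x hx hx1 hx0
    have hx0' : (0 : ℝ) < x := by exact_mod_cast hx0
    set P := (Finset.Ioc ⌊Real.log x ^ 2⌋₊ x).filter
      (fun p : ℕ => p.Prime ∧ (p : ZMod (2 * m)) = -1) with hP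
    set E : ℝ := ∑ p ∈ P, (1 / p : ℝ) with hE
    have hsm := second_moment_bound x P fun p hp => by
      rw [hP, Finset.mem_filter, Finset.mem_Ioc] at hp
      exact ⟨hp.2.1, hp.1.2⟩
    rw [← hE] at hsm
    set B := (Finset.Ioc 0 x).filter (fun n => ∀ p ∈ P, ¬ p ∣ n) with hB
    have hE0 : 0 < E := by linarith
    have hEB : E * B.card ≤ 3 * x := by
      refine le_of_mul_le_mul_left ?_ hE0
      linarith
    have hcov : ((Finset.Ioc 0 x \ B : Finset ℕ) : Set ℕ) ⊆
        {n : ℕ | 1 ≤ n ∧ n ≤ x ∧ ∃ p : ℕ, p.Prime ∧ p ∣ n ∧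
          (p : ℝ) > Real.log x ^ (1 + δ) ∧ Nat.gcd ((p - 1) / 2) m = 1} := by
      intro n hn
      rw [Finset.mem_coe, Finset.mem_sdiff, hB, Finset.mem_filter] at hn
      obtain ⟨hn1, hn2⟩ := hn
      have hn3 : ∃ p ∈ P, p ∣ n := by
        by_contra! hcon
        exact hn2 ⟨hn1, hcon⟩
      obtain ⟨p, hp, hpn⟩ := hn3
      rw [hP, Finset.mem_filter, Finset.mem_Ioc] at hp
      have hn1 := Finset.mem_Ioc.1 hn1
      refine ⟨hn1.1, hn1.2, p, hp.2.1, hpn, ?_, gcd_half_pred_eq_one hp.2.1 hp.2.2⟩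
      have h2 : Real.log x ^ 2 < p := (Nat.floor_lt (by positivity)).1 hp.1.1
      refine lt_of_le_of_lt ?_ h2
      rw [← Real.rpow_natCast]
      exact Real.rpow_le_rpow_of_exponent_le hx1 (by push_cast; linarith)
    have hcard := Set.ncard_le_ncard hcov ((Finset.finite_toSet _).subset (hsub x))
    rw [Set.ncard_coe_finset] at hcard
    have hsplit := Finset.card_sdiff_add_card_eq_card
      (Finset.filter_subset (fun n => ∀ p ∈ P, ¬ p ∣ n) (Finset.Ioc 0 x))
    rw [← hB, Nat.card_Ioc, Nat.sub_zero] at hsplit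
    have hsplit' : ((Finset.Ioc 0 x \ B).card : ℝ) + B.card = x := by exact_mod_cast hsplit
    have hcard' : ((Finset.Ioc 0 x \ B).card : ℝ) ≤ _ := Nat.cast_le.2 hcard
    rw [lt_div_iff₀ hx0']
    refine lt_of_lt_of_le ?_ hcard'
    have hKB : K * B.card ≤ 3 * x :=
      (mul_le_mul_of_nonneg_right hx (Nat.cast_nonneg _)).trans hEB
    have : K * B.card < K * ((1 - b) * x) := by
      calc K * B.card ≤ 3 * x := hKB
        _ < K * (1 - b) * x := mul_lt_mul_of_pos_right hK3 hx0'
        _ = _ := by ring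
    have := lt_of_mul_lt_mul_left this (by linarith)
    linarith
  · intro b hb
    refine Eventually.of_forall fun x => lt_of_le_of_lt (div_le_one_of_le₀ ?_ x.cast_nonneg) hb
    have := Set.ncard_le_ncard (hsub x) (Finset.finite_toSet _)
    rw [Set.ncard_coe_finset, Nat.card_Ioc, Nat.sub_zero] at this
    exact_mod_cast this
end

section
/- For every triple (r,s,t) of positive integers, the set Q(r,s,t) of orders of finite quotients of the triangle group Δ⁺(r,s,t) = ⟨x, y | x^r = y^s = (xy)^t = 1⟩ has natural density zero. -/
/-!
The proof combines Sylow theory, transfer, and primes in arithmetic progressions.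

**Group theory.** Let `G` be a quotient of the triangle group, generated by `x` and `y` with
`x ^ r = y ^ s = (x * y) ^ t = 1`. Suppose that a prime `p ≡ -1 (mod r * s * t)` not dividing
`r * s * t` divides `|G|` exactly once, and that `|G|` has no divisor `p * (1 + k * p)` with `k > 0`.
By Sylow's theorem the Sylow `p`-subgroup `P` is normal of order `p`. Conjugation on `P` is a
homomorphism `χ : G → (ℤ/p)ˣ`; as `p - 1 ≡ -2` modulo `r` and `s`, both `χ x` and `χ y` are `±1`,
so one of `z = x`, `y`, `x * y` centralizes `P`. Transfer from the centralizer of `P` to its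
center shows that the normal closure `N` of `z` has exponent prime to `p`, while `G / N` is
cyclic, generated by the image of another of the three elements, hence also of order prime to
`p`. This is absurd (`no_quotient`).

**Number theory.** For almost all `n ≤ x` such a prime `p` exists. Write `Y = (log₂ x) ^ 2`.
The `n ≤ x` divisible by `p ^ 2` or by some `p * (1 + k * p)` with `p > Y` and `k > 0` number
`O(x log x / Y) = o(x)` (`card_bad_le`). By a second moment estimate à la Turán, all but
`3 x / S(x)` of the `n ≤ x` have a prime factor `p ≡ -1` in `(Y, x]`, where `S(x)` is the sum of
the reciprocals of those primes (`turan`). Finally `S(x) → ∞` (`prime_sum_large`): the behaviour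
of `∑ Λ(n) n ^ (-σ)`, over a residue class, as `σ → 1⁺` gives constants `R`, `η > 0` such that
the sum of `1 / p` over the primes of the class in `(N, N ^ R]` is at least `η` for all large `N`
(`prime_block`), and any fixed number of such consecutive blocks fits between `Y` and `x`.
-/

open Filter

/-- Relations for the ordinary triangle group Δ⁺(r,s,t) = ⟨x, y | x^r = y^s = (xy)^t = 1⟩. -/
def triangleRels (r s t : ℕ) : Set (FreeGroup (Fin 2)) :=
  {(FreeGroup.of 0) ^ r, (FreeGroup.of 1) ^ s, (FreeGroup.of 0 * FreeGroup.of 1) ^ t}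

/-- The ordinary triangle group Δ⁺(r,s,t). -/
def TriangleGroup (r s t : ℕ) : Type := PresentedGroup (triangleRels r s t)

instance (r s t : ℕ) : Group (TriangleGroup r s t) :=
  inferInstanceAs (Group (PresentedGroup (triangleRels r s t)))

/-- The set of orders of finite quotients of Δ⁺(r,s,t). -/
def quotientOrders (r s t : ℕ) : Set ℕ :=
  {n : ℕ | ∃ (G : Type) (_ : Group G) (_ : Finite G),
      Nat.card G = n ∧ ∃ f : TriangleGroup r s t →* G, Function.Surjective f}


/-! ### Reciprocals of primes in a residue class -/

open ArithmeticFunction vonMangoldt in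
lemma residueClass_summable {q : ℕ} [NeZero q] (a : ZMod q) {x : ℝ} (hx : 1 < x) :
    Summable fun n : ℕ => residueClass a n / (n : ℝ) ^ x :=
  LSeries.summable_real_of_abscissaOfAbsConv_lt <|
    (abscissaOfAbsConv_residueClass_le_one a).trans_lt <| mod_cast hx

open ArithmeticFunction vonMangoldt Complex in
/-- The upper counterpart of `LSeries_residueClass_lower_bound`: after subtracting its simple pole
at `1`, the Dirichlet series of `Λ` on a residue class is continuous on `[1, 2]`, hence bounded. -/
lemma residueClass_upper {q : ℕ} [NeZero q] {a : ZMod q} (ha : IsUnit a) :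
    ∃ C : ℝ, 0 < C ∧ ∀ {x : ℝ} (_ : x ∈ Set.Ioc (1 : ℝ) 2),
      ∑' n, residueClass a n / (n : ℝ) ^ x ≤ C / (x - 1) := by
  have H {x : ℝ} (hx : 1 < x) :
      ∑' n, residueClass a n / (n : ℝ) ^ x =
        (LFunctionResidueClassAux a x).re + (q.totient : ℝ)⁻¹ / (x - 1) := by
    refine ofReal_injective ?_
    simp only [ofReal_tsum, ofReal_div, ofReal_cpow (Nat.cast_nonneg _), ofReal_natCast,
      ofReal_add, ofReal_inv, ofReal_sub, ofReal_one]
    simp_rw [← LFunctionResidueClassAux_real ha hx,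
      eqOn_LFunctionResidueClassAux ha <| Set.mem_ofPred.mpr (ofReal_re x ▸ hx), sub_add_cancel,
      LSeries, LSeries.term]
    refine tsum_congr fun n ↦ ?_
    split_ifs with hn
    · simp only [hn, residueClass_apply_zero, ofReal_zero, zero_div]
    · rfl
  have hcont : ContinuousOn (fun x : ℝ ↦ (LFunctionResidueClassAux a x).re) (Set.Icc 1 2) :=
    continuous_re.continuousOn.comp (t := Set.univ) (continuousOn_LFunctionResidueClassAux a)
      (fun ⦃x⦄ a ↦ trivial) |>.comp continuous_ofReal.continuousOn fun x hx ↦ by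
        simpa only [Set.mem_ofPred_eq, ofReal_re] using hx.1
  obtain ⟨C, hC⟩ := bddAbove_def.mp <| IsCompact.bddAbove_image isCompact_Icc hcont
  have hq : 0 < (q.totient : ℝ)⁻¹ := inv_pos.mpr (mod_cast q.totient.pos_of_neZero)
  refine ⟨|C| + (q.totient : ℝ)⁻¹, by positivity, fun {x} hx ↦ ?_⟩
  have h1 : (LFunctionResidueClassAux a x).re ≤ C :=
    hC _ <| Set.mem_image_of_mem (fun x : ℝ ↦ (LFunctionResidueClassAux a x).re)
      (Set.mem_Icc_of_Ioc hx)
  have hx0 : 0 < x - 1 := sub_pos.mpr hx.1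
  have h2 : |C| ≤ |C| / (x - 1) := by
    rw [le_div_iff₀ hx0]
    nlinarith [abs_nonneg C, hx.2]
  rw [H hx.1, add_div]
  linarith [le_abs_self C]

/-- The weight `n ^ (-σ)` with `σ = 1 + 1 / (D log N)` is at most `1 / n` for
`N < n ≤ N ^ (A * D)`, and outside that range it is dominated by weights with exponents of size
`1 + 1 / log N` (below) and, with the small factor `exp (-A / 2)`, `1 + 1 / (2 D log N)` (above). -/
lemma inv_rpow_split {N D A n : ℕ} (hN : 3 ≤ N) (hD : 0 < D) (hn : 0 < n) :
    ((n : ℝ) ^ (1 + 1 / (D * Real.log N)))⁻¹ ≤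
      Real.exp 1 * ((n : ℝ) ^ (1 + 1 / Real.log N))⁻¹
      + (if n ∈ Finset.Ioc N (N ^ (A * D)) then (n : ℝ)⁻¹ else 0)
      + Real.exp (-(A / 2)) * ((n : ℝ) ^ (1 + 1 / (2 * D * Real.log N)))⁻¹ := by
  have hn0 : (0 : ℝ) < n := by exact_mod_cast hn
  have hn1 : (1 : ℝ) ≤ n := by exact_mod_cast hn
  have hN0 : (0 : ℝ) < N := by positivity
  have hu : 0 < Real.log N := Real.log_pos (by exact_mod_cast (by omega : 1 < N))
  have hD0 : (0 : ℝ) < D := by exact_mod_cast hD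
  set u := Real.log N with hu_def
  have hle : ((n : ℝ) ^ (1 + 1 / (D * u)))⁻¹ ≤ (n : ℝ)⁻¹ := by
    gcongr
    calc (n : ℝ) = (n : ℝ) ^ (1 : ℝ) := (Real.rpow_one _).symm
      _ ≤ _ := Real.rpow_le_rpow_of_exponent_le hn1 (by
        have : 0 ≤ 1 / (D * u) := by positivity
        linarith)
  have p1 : 0 ≤ Real.exp 1 * ((n : ℝ) ^ (1 + 1 / u))⁻¹ := by positivity
  have p2 : 0 ≤ (if n ∈ Finset.Ioc N (N ^ (A * D)) then (n : ℝ)⁻¹ else 0) := by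
    split_ifs <;> positivity
  have p3 : 0 ≤ Real.exp (-(A / 2)) * ((n : ℝ) ^ (1 + 1 / (2 * D * u)))⁻¹ := by positivity
  rcases le_or_gt n N with h | h
  · have key : (n : ℝ)⁻¹ ≤ Real.exp 1 * ((n : ℝ) ^ (1 + 1 / u))⁻¹ := by
      rw [Real.rpow_add hn0, Real.rpow_one, mul_inv, mul_left_comm]
      have : 1 ≤ Real.exp 1 * ((n : ℝ) ^ (1 / u))⁻¹ := by
        rw [← div_eq_mul_inv, le_div_iff₀ (by positivity), one_mul, Real.rpow_def_of_pos hn0]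
        apply Real.exp_le_exp.mpr
        rw [mul_one_div, div_le_one hu]
        exact Real.log_le_log hn0 (by exact_mod_cast h)
      exact le_mul_of_one_le_right (by positivity) this
    linarith
  · rcases le_or_gt n (N ^ (A * D)) with h' | h'
    · rw [if_pos (Finset.mem_Ioc.mpr ⟨h, h'⟩)] at p2 ⊢
      linarith
    · have key : ((n : ℝ) ^ (1 + 1 / (D * u)))⁻¹ ≤
          Real.exp (-(A / 2)) * ((n : ℝ) ^ (1 + 1 / (2 * D * u)))⁻¹ := by
        have e : (1 + 1 / (D * u)) = 1 / (2 * D * u) + (1 + 1 / (2 * D * u)) := by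
          field_simp
          ring
        rw [e, Real.rpow_add hn0, mul_inv]
        gcongr
        rw [Real.exp_neg]
        gcongr
        rw [Real.rpow_def_of_pos hn0]
        apply Real.exp_le_exp.mpr
        have : (A * D : ℝ) * u ≤ Real.log n := by
          have h2 : ((N : ℝ) ^ (A * D)) ≤ n := by exact_mod_cast h'.le
          have := Real.log_le_log (by positivity) h2
          rw [Real.log_pow] at this
          push_cast at this
          exact this
        rw [mul_one_div, div_le_div_iff₀ (by norm_num) (by positivity)]
        nlinarith
      linarith

open ArithmeticFunction vonMangoldt in
/-- A weak Mertens theorem for residue classes: on the scale `(N, N ^ R]`, the reciprocals of the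
primes in an invertible class have sum bounded below. Summing `inv_rpow_split` against `Λ` on the
class, the left side is about `c D log N` with `c = 1 / φ(q)`; suitable `A` and `D` make the two
outer terms at most half of that, so the rest comes from `N < n ≤ N ^ (A * D)`. -/
lemma prime_block {q : ℕ} [NeZero q] {a : ZMod q} (ha : IsUnit a) :
    ∃ R : ℕ, 0 < R ∧ ∃ η : ℝ, 0 < η ∧ ∃ N₀ : ℕ, ∀ N : ℕ, N₀ ≤ N →
      η ≤ ∑ p ∈ (Finset.Ioc N (N ^ R)).filter (fun p : ℕ => p.Prime ∧ (p : ZMod q) = a),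
        (p : ℝ)⁻¹ := by
  classical
  obtain ⟨C₀, hC₀⟩ := LSeries_residueClass_lower_bound ha
  obtain ⟨C, hC, hCu⟩ := residueClass_upper ha
  set c : ℝ := (q.totient : ℝ)⁻¹ with hc_def
  have hc : 0 < c := inv_pos.mpr (mod_cast q.totient.pos_of_neZero)
  set B : ℝ := ∑' n : ℕ, (if n.Prime then 0 else residueClass a n) / n with hB
  -- choose `A` so that the tail beyond `N ^ (A * D)` is negligible
  obtain ⟨A, hA0, hA⟩ : ∃ A : ℕ, 0 < A ∧ Real.exp (-(A / 2)) * (2 * C) ≤ c / 4 := by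
    have h : Tendsto (fun A : ℕ => Real.exp (-((A : ℝ) / 2)) * (2 * C)) atTop
        (nhds (0 * (2 * C))) := by
      refine Tendsto.mul_const _ ?_
      refine Real.tendsto_exp_neg_atTop_nhds_zero.comp ?_
      exact tendsto_natCast_atTop_atTop.atTop_div_const (by norm_num)
    rw [zero_mul] at h
    have := (h.eventually (eventually_le_nhds (show 0 < c / 4 by positivity))).and
      (eventually_gt_atTop 0)
    obtain ⟨A, h1, h2⟩ := this.exists
    exact ⟨A, h2, h1⟩
  -- choose `D` so that the contribution of `n ≤ N` is negligible
  obtain ⟨D, hD⟩ := exists_nat_gt (max 1 (4 * (Real.exp 1 * C) / c))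
  have hD1 : (1 : ℝ) < D := (le_max_left _ _).trans_lt hD
  have hDpos : 0 < D := by
    have : (0 : ℝ) < D := by linarith
    exact_mod_cast this
  have hD2 : Real.exp 1 * C ≤ c * D / 4 := by
    have := (le_max_right _ _).trans hD.le
    rw [div_le_iff₀ hc] at this
    linarith
  have hAD : (0 : ℝ) < A * D := by positivity
  obtain ⟨N₀, hN₀⟩ := exists_nat_gt (Real.exp (4 * |C₀ + B| / (c * D)))
  refine ⟨A * D, by positivity, c / (4 * A), by positivity, max 3 N₀, fun N hN => ?_⟩
  have hN3 : 3 ≤ N := (le_max_left _ _).trans hN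
  have hN' : (N₀ : ℝ) ≤ N := by exact_mod_cast (le_max_right _ _).trans hN
  have hNpos : (0 : ℝ) < N := by positivity
  set u := Real.log N with hu_def
  have hu1 : 1 ≤ u := by
    rw [hu_def, Real.le_log_iff_exp_le hNpos]
    have : (3 : ℝ) ≤ N := by exact_mod_cast hN3
    linarith [Real.exp_one_lt_d9]
  have hu2 : |C₀ + B| ≤ c * D * u / 4 := by
    have : 4 * |C₀ + B| / (c * D) ≤ u := by
      rw [hu_def, Real.le_log_iff_exp_le hNpos]
      linarith
    rw [div_le_iff₀ (by positivity)] at this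
    linarith
  have hu0 : 0 < u := by linarith
  have mem (t : ℝ) (ht : 1 ≤ t) : 1 + 1 / t ∈ Set.Ioc (1 : ℝ) 2 := by
    have h1 : 0 < 1 / t := by positivity
    have h2 : 1 / t ≤ 1 := by rw [div_le_one (by linarith)]; exact ht
    exact ⟨by linarith, by linarith⟩
  have hm1 := mem u hu1
  have hm2 := mem (D * u) (by nlinarith)
  have hm3 := mem (2 * D * u) (by nlinarith)
  set S := Finset.Ioc N (N ^ (A * D)) with hS
  set g : ℕ → ℝ := fun n => if n ∈ S then residueClass a n / n else 0 with hg
  have hgs : Summable g := summable_of_ne_finset_zero (s := S) (fun n hn => by simp [hg, hn])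
  have s1 := residueClass_summable a hm1.1
  have s2 := residueClass_summable a hm2.1
  have s3 := residueClass_summable a hm3.1
  have hsum : ∑' n, residueClass a n / (n : ℝ) ^ (1 + 1 / (D * u)) ≤
      Real.exp 1 * ∑' n, residueClass a n / (n : ℝ) ^ (1 + 1 / u) + ∑' n, g n
      + Real.exp (-(A / 2)) * ∑' n, residueClass a n / (n : ℝ) ^ (1 + 1 / (2 * D * u)) := by
    rw [← tsum_mul_left, ← tsum_mul_left, ← (s1.mul_left _).tsum_add hgs,
      ← ((s1.mul_left _).add hgs).tsum_add (s3.mul_left _)]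
    refine s2.tsum_le_tsum (fun n => ?_) (((s1.mul_left _).add hgs).add (s3.mul_left _))
    rcases n.eq_zero_or_pos with rfl | hn
    · simp [hg]
    · have := mul_le_mul_of_nonneg_left (inv_rpow_split (A := A) hN3 hDpos hn)
        (residueClass_nonneg a n)
      refine (le_of_eq (div_eq_mul_inv _ _)).trans (this.trans (le_of_eq ?_))
      simp only [hg, hS, div_eq_mul_inv]
      split_ifs <;> ring
  have b1 : ∑' n, residueClass a n / (n : ℝ) ^ (1 + 1 / u) ≤ C * u := by
    refine (hCu hm1).trans (le_of_eq ?_)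
    rw [add_sub_cancel_left]; field_simp
  have b2 : c * (D * u) - C₀ ≤ ∑' n, residueClass a n / (n : ℝ) ^ (1 + 1 / (D * u)) := by
    refine (le_of_eq ?_).trans (hC₀ hm2)
    rw [add_sub_cancel_left]; field_simp
  have b3 : ∑' n, residueClass a n / (n : ℝ) ^ (1 + 1 / (2 * D * u)) ≤ C * (2 * D * u) := by
    refine (hCu hm3).trans (le_of_eq ?_)
    rw [add_sub_cancel_left]; field_simp
  have b4 : ∑' n, g n ≤ (A * D * u) *
      (∑ p ∈ S.filter (fun p : ℕ => p.Prime ∧ (p : ZMod q) = a), (p : ℝ)⁻¹) + B := by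
    have e1 : ∑' n, g n = ∑ n ∈ S, residueClass a n / n := by
      rw [tsum_eq_sum (s := S) (fun n hn => by simp [hg, hn])]
      exact Finset.sum_congr rfl fun n hn => by simp [hg, hn]
    have e2 : ∑ n ∈ S, (if n.Prime then 0 else residueClass a n) / (n : ℝ) ≤ B :=
      (summable_residueClass_non_primes_div a).sum_le_tsum S fun n _ => by
        have := residueClass_nonneg a n
        split_ifs <;> positivity
    have e3 : ∑ n ∈ S, (if n.Prime then residueClass a n else 0) / (n : ℝ) ≤ (A * D * u) *
        (∑ p ∈ S.filter (fun p : ℕ => p.Prime ∧ (p : ZMod q) = a), (p : ℝ)⁻¹) := by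
      rw [Finset.mul_sum, Finset.sum_filter]
      refine Finset.sum_le_sum fun n hn => ?_
      have hn' := Finset.mem_Ioc.mp hn
      by_cases hp : n.Prime
      · by_cases hna : (n : ZMod q) = a
        · have hn0 : (0 : ℝ) < n := by exact_mod_cast hp.pos
          rw [if_pos hp, if_pos ⟨hp, hna⟩, div_eq_mul_inv]
          gcongr
          refine (residueClass_le a n).trans ?_
          rw [vonMangoldt_apply_prime hp]
          have h2 : (n : ℝ) ≤ ((N : ℝ) ^ (A * D)) := by exact_mod_cast hn'.2
          have := Real.log_le_log hn0 h2
          rw [Real.log_pow] at this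
          push_cast at this
          exact this
        · rw [if_pos hp, if_neg (fun h => hna h.2)]
          simp [residueClass, hna]
      · simp [hp]
    have e4 : ∑ n ∈ S, residueClass a n / (n : ℝ) =
        ∑ n ∈ S, (if n.Prime then 0 else residueClass a n) / (n : ℝ)
        + ∑ n ∈ S, (if n.Prime then residueClass a n else 0) / (n : ℝ) := by
      rw [← Finset.sum_add_distrib]
      exact Finset.sum_congr rfl fun n _ => by split_ifs <;> simp
    linarith
  set T := ∑ p ∈ S.filter (fun p : ℕ => p.Prime ∧ (p : ZMod q) = a), (p : ℝ)⁻¹ with hT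
  have c1 : Real.exp 1 * ∑' n, residueClass a n / (n : ℝ) ^ (1 + 1 / u) ≤ c * D / 4 * u := by
    calc _ ≤ Real.exp 1 * (C * u) := by gcongr
      _ = (Real.exp 1 * C) * u := by ring
      _ ≤ _ := by gcongr
  have c3 : Real.exp (-(A / 2)) * ∑' n, residueClass a n / (n : ℝ) ^ (1 + 1 / (2 * D * u))
      ≤ c / 4 * (D * u) := by
    calc _ ≤ Real.exp (-(A / 2)) * (C * (2 * D * u)) := by gcongr
      _ = (Real.exp (-(A / 2)) * (2 * C)) * (D * u) := by ring
      _ ≤ _ := by gcongr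
  have hfin : c * D * u / 4 ≤ A * D * u * T := by
    linarith [le_abs_self (C₀ + B)]
  have hDu : 0 < D * u := by positivity
  have hA0' : (0 : ℝ) < A := by exact_mod_cast hA0
  rw [div_le_iff₀ (by positivity)]
  by_contra! hcon
  have := mul_lt_mul_of_pos_right hcon hDu
  nlinarith

/-- Consecutive blocks `(N ^ (R ^ i), N ^ (R ^ (i + 1))]` each contribute at least `η`. -/
lemma prime_blocks {q : ℕ} [NeZero q] {a : ZMod q} (ha : IsUnit a) (T : ℝ) :
    ∃ m : ℕ, ∃ N₀ : ℕ, ∀ N : ℕ, N₀ ≤ N →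
      T ≤ ∑ p ∈ (Finset.Ioc N (N ^ m)).filter (fun p : ℕ => p.Prime ∧ (p : ZMod q) = a),
        (p : ℝ)⁻¹ := by
  classical
  obtain ⟨R, hR, η, hη, N₀, hN₀⟩ := prime_block ha
  have key : ∀ k : ℕ, ∀ N : ℕ, max 1 N₀ ≤ N → k * η ≤
      ∑ p ∈ (Finset.Ioc N (N ^ (R ^ k))).filter (fun p : ℕ => p.Prime ∧ (p : ZMod q) = a),
        (p : ℝ)⁻¹ := by
    intro k N hN
    have hN1 : 1 ≤ N := (le_max_left _ _).trans hN
    have hN2 : N₀ ≤ N := (le_max_right _ _).trans hN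
    induction k with
    | zero => simp
    | succ k ih =>
      have h1 : N ≤ N ^ (R ^ k) := Nat.le_self_pow (by positivity) N
      have h2 : N ^ (R ^ k) ≤ (N ^ (R ^ k)) ^ R := Nat.le_self_pow (by positivity) _
      have := hN₀ (N ^ (R ^ k)) (hN2.trans h1)
      rw [pow_succ, pow_mul, ← Finset.Ioc_union_Ioc_eq_Ioc h1 h2, Finset.filter_union,
        Finset.sum_union]
      · push_cast
        linarith
      · refine Finset.disjoint_filter_filter (Finset.disjoint_left.mpr fun n hn hn' => ?_)
        have := (Finset.mem_Ioc.mp hn).2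
        have := (Finset.mem_Ioc.mp hn').1
        omega
  obtain ⟨k, hk⟩ := exists_nat_gt (T / η)
  rw [div_lt_iff₀ hη] at hk
  exact ⟨R ^ k, max 1 N₀, fun N hN => hk.le.trans (key k N hN)⟩

lemma tendsto_log_two : Tendsto (fun x : ℕ => Nat.log 2 x) atTop atTop := by
  refine tendsto_atTop.mpr fun b => ?_
  filter_upwards [eventually_ge_atTop (2 ^ b)] with x hx
  exact Nat.le_log_of_pow_le (by norm_num) hx

/-- The sum over `(Y, x]` of reciprocals of primes in an invertible class tends to infinity, even
with the cutoff `Y = (log₂ x) ^ 2`, because any fixed power of `Y` is eventually below `x`. -/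
lemma prime_sum_large {q : ℕ} [NeZero q] {a : ZMod q} (ha : IsUnit a) (T : ℝ) :
    ∀ᶠ x : ℕ in atTop, T ≤ ∑ p ∈ (Finset.Ioc (Nat.log 2 x ^ 2) x).filter
        (fun p : ℕ => p.Prime ∧ (p : ZMod q) = a), (p : ℝ)⁻¹ := by
  obtain ⟨m, N₀, h⟩ := prime_blocks ha T
  have h1 : ∀ᶠ l : ℕ in atTop, (l ^ 2) ^ m ≤ 2 ^ l := by
    have := tendsto_pow_const_div_const_pow_of_one_lt (2 * m) (r := 2) (by norm_num)
    filter_upwards [this.eventually (eventually_le_nhds (show (0 : ℝ) < 1 by norm_num))] with l hl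
    rw [div_le_one (by positivity)] at hl
    rw [← pow_mul]
    exact_mod_cast hl
  filter_upwards [tendsto_log_two.eventually h1, tendsto_log_two.eventually_ge_atTop (max 1 N₀),
    eventually_ge_atTop 1] with x hx hx2 hx3
  have hl1 : 1 ≤ Nat.log 2 x := (le_max_left _ _).trans hx2
  have hl2 : N₀ ≤ Nat.log 2 x := (le_max_right _ _).trans hx2
  have hx4 : (Nat.log 2 x ^ 2) ^ m ≤ x := hx.trans (Nat.pow_log_le_self 2 (by omega))
  refine (h (Nat.log 2 x ^ 2) (hl2.trans (Nat.le_self_pow (by norm_num) _))).trans ?_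
  refine Finset.sum_le_sum_of_subset_of_nonneg ?_ fun _ _ _ => by positivity
  exact Finset.filter_subset_filter _ (Finset.Ioc_subset_Ioc_right hx4)

/-! ### Counting integers -/

lemma card_dvd_le (x d : ℕ) :
    (((Finset.Ioc 0 x).filter (fun n => d ∣ n)).card : ℝ) ≤ x * (d : ℝ)⁻¹ := by
  rw [Nat.Ioc_filter_dvd_card_eq_div]
  exact Nat.cast_div_le.trans (le_of_eq (div_eq_mul_inv _ _))

/-- Turán's inequality: the number of primes of `P` dividing `n` has mean about `S = ∑ 1 / p` and
second central moment at most `3 x S` in total over `n ≤ x`, so it rarely vanishes. -/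
lemma turan (x : ℕ) (P : Finset ℕ) (hP : ∀ p ∈ P, p.Prime ∧ p ≤ x)
    (hS : 0 < ∑ p ∈ P, (p : ℝ)⁻¹) :
    (((Finset.Ioc 0 x).filter (fun n => ∀ p ∈ P, ¬ p ∣ n)).card : ℝ) ≤
      3 * x / ∑ p ∈ P, (p : ℝ)⁻¹ := by
  classical
  set S := ∑ p ∈ P, (p : ℝ)⁻¹ with hS_def
  set w : ℕ → ℝ := fun n => ∑ p ∈ P, if p ∣ n then (1 : ℝ) else 0 with hw
  have cnt (d : ℕ) : ∑ n ∈ Finset.Ioc 0 x, (if d ∣ n then (1 : ℝ) else 0) =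
      ((Finset.Ioc 0 x).filter (fun n => d ∣ n)).card := by
    rw [Finset.sum_boole]
  have hPcard : (P.card : ℝ) ≤ x := by
    have : P ⊆ Finset.Ioc 0 x := fun p hp =>
      Finset.mem_Ioc.mpr ⟨(hP p hp).1.pos, (hP p hp).2⟩
    have := Finset.card_le_card this
    simp at this
    exact_mod_cast this
  have h1 : x * S - x ≤ ∑ n ∈ Finset.Ioc 0 x, w n := by
    rw [hw, Finset.sum_comm, Finset.sum_congr rfl fun p _ => cnt p, hS_def, Finset.mul_sum]
    have : ∑ p ∈ P, ((x : ℝ) * (p : ℝ)⁻¹ - 1) ≤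
        ∑ p ∈ P, (((Finset.Ioc 0 x).filter (fun n => p ∣ n)).card : ℝ) := by
      refine Finset.sum_le_sum fun p hp => ?_
      rw [Nat.Ioc_filter_dvd_card_eq_div, ← Nat.floor_div_eq_div (K := ℝ), ← div_eq_mul_inv]
      linarith [Nat.lt_floor_add_one ((x : ℝ) / p)]
    rw [Finset.sum_sub_distrib] at this
    simp only [Finset.sum_const, nsmul_eq_mul, mul_one] at this
    linarith
  have h2 : ∑ n ∈ Finset.Ioc 0 x, w n ^ 2 ≤ x * S ^ 2 + x * S := by
    have e : ∀ n, w n ^ 2 = ∑ p ∈ P, ∑ p' ∈ P, if p ∣ n ∧ p' ∣ n then (1 : ℝ) else 0 := by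
      intro n
      rw [sq, hw, Finset.sum_mul_sum]
      refine Finset.sum_congr rfl fun p _ => Finset.sum_congr rfl fun p' _ => ?_
      by_cases h1 : p ∣ n <;> by_cases h2 : p' ∣ n <;> simp [h1, h2]
    simp_rw [e]
    rw [Finset.sum_comm]
    have : ∀ p ∈ P, ∑ n ∈ Finset.Ioc 0 x, ∑ p' ∈ P, (if p ∣ n ∧ p' ∣ n then (1 : ℝ) else 0) ≤
        ∑ p' ∈ P, (x * ((p : ℝ)⁻¹ * (p' : ℝ)⁻¹) + if p = p' then x * (p : ℝ)⁻¹ else 0) := by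
      intro p hp
      rw [Finset.sum_comm]
      refine Finset.sum_le_sum fun p' hp' => ?_
      by_cases hpp : p = p'
      · subst hpp
        simp only [and_self, if_true]
        rw [cnt]
        have := card_dvd_le x p
        have : (0 : ℝ) ≤ x * ((p : ℝ)⁻¹ * (p : ℝ)⁻¹) := by positivity
        linarith
      · have hco : Nat.Coprime p p' := (Nat.coprime_primes (hP p hp).1 (hP p' hp').1).mpr hpp
        rw [if_neg hpp, add_zero]
        have : ∀ n, (if p ∣ n ∧ p' ∣ n then (1 : ℝ) else 0) = if p * p' ∣ n then 1 else 0 := by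
          intro n
          congr 1
          exact propext ⟨fun h => hco.mul_dvd_of_dvd_of_dvd h.1 h.2,
            fun h => ⟨(dvd_mul_right _ _).trans h, (dvd_mul_left _ _).trans h⟩⟩
        simp_rw [this]
        rw [cnt]
        refine (card_dvd_le x (p * p')).trans (le_of_eq ?_)
        push_cast
        rw [mul_inv]
    refine (Finset.sum_le_sum this).trans (le_of_eq ?_)
    simp_rw [Finset.sum_add_distrib]
    congr 1
    · rw [sq, hS_def, Finset.sum_mul_sum, Finset.mul_sum]
      exact Finset.sum_congr rfl fun p _ => by rw [Finset.mul_sum]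
    · rw [hS_def, Finset.mul_sum]
      refine Finset.sum_congr rfl fun p hp => ?_
      simp [hp]
  have h3 : ∑ n ∈ Finset.Ioc 0 x, (w n - S) ^ 2 ≤ 3 * x * S := by
    have : ∑ n ∈ Finset.Ioc 0 x, (w n - S) ^ 2 =
        ∑ n ∈ Finset.Ioc 0 x, w n ^ 2 - 2 * S * ∑ n ∈ Finset.Ioc 0 x, w n + x * S ^ 2 := by
      rw [Finset.mul_sum, ← Finset.sum_sub_distrib]
      have : (x : ℝ) * S ^ 2 = ∑ n ∈ Finset.Ioc 0 x, S ^ 2 := by simp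
      rw [this, ← Finset.sum_add_distrib]
      exact Finset.sum_congr rfl fun n _ => by ring
    rw [this]
    nlinarith
  have h4 : (((Finset.Ioc 0 x).filter (fun n => ∀ p ∈ P, ¬ p ∣ n)).card : ℝ) * S ^ 2 ≤
      ∑ n ∈ Finset.Ioc 0 x, (w n - S) ^ 2 := by
    rw [← nsmul_eq_mul, ← Finset.sum_const]
    calc _ = ∑ n ∈ (Finset.Ioc 0 x).filter (fun n => ∀ p ∈ P, ¬ p ∣ n), (w n - S) ^ 2 := by
          refine Finset.sum_congr rfl fun n hn => ?_
          have : w n = 0 := Finset.sum_eq_zero fun p hp =>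
            if_neg ((Finset.mem_filter.mp hn).2 p hp)
          rw [this]; ring
      _ ≤ _ := Finset.sum_le_sum_of_subset_of_nonneg (Finset.filter_subset _ _)
          fun _ _ _ => sq_nonneg _
  rw [le_div_iff₀ hS]
  have := h4.trans h3
  rw [sq, ← mul_assoc] at this
  exact le_of_mul_le_mul_right this hS

open scoped Classical in
/-- The integers that can be the order of a group having, for some prime `p > Y` dividing it,
a Sylow `p`-subgroup not normal of order `p`, are rare. -/
lemma card_bad_le (x Y : ℕ) (hY : 0 < Y) :
    (((Finset.Ioc 0 x).filter (fun n => ∃ p, Y < p ∧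
      (p * p ∣ n ∨ ∃ k, 0 < k ∧ p * (1 + k * p) ∣ n))).card : ℝ) ≤
      x * ((Nat.log 2 x + 3) / Y) := by
  rcases x.eq_zero_or_pos with rfl | hx
  · simp
  have hsub : (Finset.Ioc 0 x).filter (fun n => ∃ p, Y < p ∧
      (p * p ∣ n ∨ ∃ k, 0 < k ∧ p * (1 + k * p) ∣ n)) ⊆
      (Finset.Ioc Y x).biUnion fun p => (Finset.Ioc 0 x).filter (fun n => p * p ∣ n) ∪
        (Finset.Icc 1 x).biUnion fun k =>
          (Finset.Ioc 0 x).filter (fun n => p * (1 + k * p) ∣ n) := by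
    intro n hn
    obtain ⟨hn, p, hp, h⟩ := Finset.mem_filter.mp hn
    have hn' := Finset.mem_Ioc.mp hn
    have hpn : p ∣ n := by
      rcases h with h | ⟨k, _, h⟩ <;> exact (dvd_mul_right _ _).trans h
    simp only [Finset.mem_biUnion, Finset.mem_union, Finset.mem_filter, Finset.mem_Ioc,
      Finset.mem_Icc]
    refine ⟨p, ⟨hp, (Nat.le_of_dvd hn'.1 hpn).trans hn'.2⟩, ?_⟩
    rcases h with h | ⟨k, hk, h⟩
    · exact Or.inl ⟨hn', h⟩
    · refine Or.inr ⟨k, ⟨hk, ?_⟩, hn', h⟩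
      have h1 := Nat.le_of_dvd hn'.1 ((dvd_mul_left _ _).trans h)
      have : k ≤ k * p := Nat.le_mul_of_pos_right k (by omega)
      omega
  have hharm : ∑ k ∈ Finset.Icc 1 x, (k : ℝ)⁻¹ ≤ Nat.log 2 x + 2 := by
    have h1 := harmonic_le_one_add_log x
    rw [harmonic_eq_sum_Icc] at h1
    push_cast at h1
    have h2 : Real.log x ≤ Nat.log 2 x + 1 := by
      have h3 : (x : ℝ) ≤ 2 ^ (Nat.log 2 x + 1) := by
        exact_mod_cast (Nat.lt_pow_succ_log_self (by norm_num) x).le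
      have := Real.log_le_log (by exact_mod_cast hx) h3
      rw [Real.log_pow] at this
      push_cast at this
      have h5 : Real.log 2 ≤ 1 := by linarith [Real.log_two_lt_d9]
      have h6 : (0 : ℝ) ≤ Nat.log 2 x + 1 := by positivity
      nlinarith
    linarith
  have hsq : ∑ p ∈ Finset.Ioc Y x, ((p : ℝ) ^ 2)⁻¹ ≤ (Y : ℝ)⁻¹ := by
    rcases le_or_gt Y x with h | h
    · have := sum_Ioc_inv_sq_le_sub (α := ℝ) hY.ne' h
      have : (0 : ℝ) ≤ (x : ℝ)⁻¹ := by positivity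
      linarith
    · rw [Finset.Ioc_eq_empty (by omega)]
      simp
  calc _ ≤ (((Finset.Ioc Y x).biUnion fun p => (Finset.Ioc 0 x).filter (fun n => p * p ∣ n) ∪
        (Finset.Icc 1 x).biUnion fun k =>
          (Finset.Ioc 0 x).filter (fun n => p * (1 + k * p) ∣ n)).card : ℝ) := by
        exact_mod_cast Finset.card_le_card hsub
    _ ≤ ∑ p ∈ Finset.Ioc Y x, (((Finset.Ioc 0 x).filter (fun n => p * p ∣ n)).card +
        ∑ k ∈ Finset.Icc 1 x,
          (((Finset.Ioc 0 x).filter (fun n => p * (1 + k * p) ∣ n)).card) : ℝ) := by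
        exact_mod_cast Finset.card_biUnion_le.trans (Finset.sum_le_sum fun p _ =>
          (Finset.card_union_le _ _).trans (Nat.add_le_add_left Finset.card_biUnion_le _))
    _ ≤ ∑ p ∈ Finset.Ioc Y x, (x * (Nat.log 2 x + 3)) * ((p : ℝ) ^ 2)⁻¹ := by
        refine Finset.sum_le_sum fun p hp => ?_
        have hp0 : (0 : ℝ) < p := by
          have := (Finset.mem_Ioc.mp hp).1
          exact_mod_cast (by omega : 0 < p)
        have h1 := card_dvd_le x (p * p)
        have h2 : ∑ k ∈ Finset.Icc 1 x,
            (((Finset.Ioc 0 x).filter (fun n => p * (1 + k * p) ∣ n)).card : ℝ) ≤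
            ∑ k ∈ Finset.Icc 1 x, (x * ((p : ℝ) ^ 2)⁻¹) * (k : ℝ)⁻¹ := by
          refine Finset.sum_le_sum fun k hk => (card_dvd_le x _).trans ?_
          have hk0 : (0 : ℝ) < k := by exact_mod_cast (Finset.mem_Icc.mp hk).1
          rw [mul_assoc, ← mul_inv]
          gcongr
          push_cast
          nlinarith
        rw [← Finset.mul_sum] at h2
        have h3 : (x * ((p : ℝ) ^ 2)⁻¹) * ∑ k ∈ Finset.Icc 1 x, (k : ℝ)⁻¹ ≤
          (x * ((p : ℝ) ^ 2)⁻¹) * (Nat.log 2 x + 2) := by gcongr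
        rw [Nat.cast_mul, ← sq (p : ℝ)] at h1
        push_cast
        linarith
    _ = (x * (Nat.log 2 x + 3)) * ∑ p ∈ Finset.Ioc Y x, ((p : ℝ) ^ 2)⁻¹ := by
        rw [Finset.mul_sum]
    _ ≤ (x * (Nat.log 2 x + 3)) * (Y : ℝ)⁻¹ := by gcongr
    _ = _ := by rw [mul_assoc, ← div_eq_mul_inv]

/-! ### Groups with a normal Sylow subgroup of prime order -/

/-- If all conjugates of `z` commute with an element `g` of order `p`, and `p ^ 2 ∤ |G|`, then `G`
is not generated by `z` and `w` with the orders of `z` and `w` prime to `p`: the normal closure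
`N` of `z` has exponent prime to `p` by transfer in the centralizer of `g`, and `G / N` is cyclic
of order prime to `p`. -/
lemma cyclic_quotient_obstruction {G : Type*} [Group G] [Finite G] {p : ℕ} (hp : p.Prime)
    (hsq : ¬ p * p ∣ Nat.card G) {g : G} (hg : orderOf g = p)
    {z w : G} (hz : ∀ u : G, Commute (u * z * u⁻¹) g) {r s : ℕ}
    (hzr : z ^ r = 1) (hws : w ^ s = 1) (hr : ¬ p ∣ r) (hs : ¬ p ∣ s)
    (hzw : Subgroup.closure {z, w} = ⊤) : False := by
  classical
  set N := Subgroup.normalClosure ({z} : Set G) with hN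
  set C := Subgroup.centralizer ({g} : Set G) with hC
  have hNC : N ≤ C := by
    rw [hN, Subgroup.normalClosure, Subgroup.closure_le]
    intro v hv
    obtain ⟨_, h1, h2⟩ := Group.mem_conjugatesOfSet_iff.mp hv
    rw [Set.mem_singleton_iff] at h1
    subst h1
    obtain ⟨u, rfl⟩ := isConj_iff.mp h2
    exact Subgroup.mem_centralizer_singleton_iff.mpr (hz u)
  set k := (Subgroup.center C).index with hk
  have hgC : g ∈ C := Subgroup.mem_centralizer_singleton_iff.mpr rfl
  have hpk : ¬ p ∣ k := by
    intro h
    apply hsq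
    have h1 : p ∣ Nat.card (Subgroup.center C) := by
      have hmem : (⟨g, hgC⟩ : C) ∈ Subgroup.center C := by
        rw [Subgroup.mem_center_iff]
        rintro ⟨v, hv⟩
        exact Subtype.ext (Subgroup.mem_centralizer_singleton_iff.mp hv)
      have := orderOf_dvd_natCard (⟨⟨g, hgC⟩, hmem⟩ : Subgroup.center C)
      rwa [Subgroup.orderOf_mk, Subgroup.orderOf_mk, hg] at this
    have h2 := (Subgroup.center C).card_mul_index
    exact ((mul_dvd_mul h1 h).trans (dvd_of_eq h2)).trans (Subgroup.card_subgroup_dvd_card C)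
  -- every element of `N` is killed by `k * r`
  have hkill : ∀ v ∈ N, v ^ (k * r) = 1 := by
    intro v hv
    have hpow : ∀ c d : C, (c * d) ^ k = c ^ k * d ^ k := fun c d => by
      have h := congrArg Subtype.val (map_mul (MonoidHom.transferCenterPow C) c d)
      rwa [Subgroup.coe_mul, MonoidHom.transferCenterPow_apply, MonoidHom.transferCenterPow_apply,
        MonoidHom.transferCenterPow_apply] at h
    have hcen : ∀ c : C, c ^ k ∈ Subgroup.center C := fun c =>
      MonoidHom.transferCenterPow_apply c ▸ (MonoidHom.transferCenterPow C c).2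
    -- `c ↦ c ^ k` is the transfer to the center of `C`, so the solutions of `c ^ (k * r) = 1`
    -- in `C` form a subgroup
    let K : Subgroup C :=
      { carrier := {c | c ^ (k * r) = 1}
        one_mem' := one_pow _
        inv_mem' := fun {c} hc => by
          simp only [Set.mem_ofPred_eq] at hc ⊢
          rw [inv_pow, hc, inv_one]
        mul_mem' := fun {c d} hc hd => by
          simp only [Set.mem_ofPred_eq] at hc hd ⊢
          have hcd : Commute (c ^ k) (d ^ k) := Subgroup.mem_center_iff.mp (hcen d) _
          rw [pow_mul, hpow, hcd.mul_pow, ← pow_mul, ← pow_mul, hc, hd, one_mul] }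
    have hK : ∀ c : C, c ∈ K ↔ (c : G) ^ (k * r) = 1 := fun c => by
      rw [← Subgroup.coe_pow, OneMemClass.coe_eq_one]
      rfl
    have hle : N ≤ K.map C.subtype := by
      rw [hN, Subgroup.normalClosure, Subgroup.closure_le]
      intro v hv
      have hvC : v ∈ C := hNC (Subgroup.subset_closure hv)
      obtain ⟨_, h1, h2⟩ := Group.mem_conjugatesOfSet_iff.mp hv
      rw [Set.mem_singleton_iff] at h1
      subst h1
      obtain ⟨u, rfl⟩ := isConj_iff.mp h2
      refine ⟨⟨_, hvC⟩, (hK _).mpr ?_, rfl⟩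
      simp [conj_pow, mul_comm k r, pow_mul, hzr]
    obtain ⟨c, hc, rfl⟩ := hle hv
    exact (hK c).mp hc
  -- the quotient by `N` is generated by the image of `w`
  have htop : (Subgroup.zpowers (w : G ⧸ N)) = ⊤ := by
    have h1 : (Subgroup.closure {z, w}).map (QuotientGroup.mk' N) = ⊤ := by
      rw [hzw, ← MonoidHom.range_eq_map, MonoidHom.range_eq_top]
      exact QuotientGroup.mk'_surjective N
    rw [MonoidHom.map_closure, Set.image_pair] at h1
    have hz1 : QuotientGroup.mk' N z = 1 :=
      (QuotientGroup.eq_one_iff z).mpr (Subgroup.subset_normalClosure rfl)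
    rw [hz1] at h1
    rw [eq_top_iff, ← h1, Subgroup.closure_le]
    rintro v (rfl | hv)
    · exact one_mem _
    · rw [Set.mem_singleton_iff.mp hv]
      exact Subgroup.mem_zpowers _
  have hgs : g ^ s ∈ N := by
    have : (g : G ⧸ N) ∈ Subgroup.zpowers (w : G ⧸ N) := htop ▸ Subgroup.mem_top _
    obtain ⟨j, hj⟩ := this
    rw [← QuotientGroup.eq_one_iff, QuotientGroup.mk_pow]
    have hj' : (w : G ⧸ N) ^ j = g := hj
    rw [← hj', ← zpow_natCast, ← zpow_mul, mul_comm, zpow_mul, zpow_natCast,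
      ← QuotientGroup.mk_pow, hws]
    simp
  have h1 := hkill _ hgs
  rw [← pow_mul, ← orderOf_dvd_iff_pow_eq_one, hg] at h1
  rcases hp.dvd_mul.mp h1 with h | h
  · exact hs h
  · rcases hp.dvd_mul.mp h with h | h
    · exact hpk h
    · exact hr h

/-- The order of `u` divides both `p + 1` and `p - 1`, hence divides `2`. -/
lemma unit_sign {p r : ℕ} [Fact p.Prime] (h : r ∣ p + 1) {u : (ZMod p)ˣ} (hu : u ^ r = 1) :
    u = 1 ∨ u = -1 := by
  have h1 : orderOf u ∣ p + 1 := (orderOf_dvd_of_pow_eq_one hu).trans h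
  have h2 : orderOf u ∣ p - 1 := orderOf_dvd_of_pow_eq_one (ZMod.units_pow_card_sub_one_eq_one p u)
  have h3 : orderOf u ∣ 2 := by
    have hp := (Fact.out : p.Prime).two_le
    have := Nat.dvd_sub h1 h2
    rwa [show p + 1 - (p - 1) = 2 by omega] at this
  have h4 : (u : ZMod p) ^ 2 = 1 := by
    rw [← Units.val_pow_eq_pow_val, orderOf_dvd_iff_pow_eq_one.mp h3, Units.val_one]
  rcases sq_eq_one_iff.mp h4 with h | h
  · exact Or.inl (Units.ext h)
  · exact Or.inr (Units.ext (by simpa using h))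

/-- A group of order `n` cannot be a quotient of the triangle group if, for some prime `p ∣ n` with
`p ∤ r s t` and `p ≡ -1` modulo `r` and `s`, the arithmetic of `n` forces a normal Sylow `p`-subgroup of order `p`. -/
theorem no_quotient {G : Type*} [Group G] [Finite G] {p : ℕ} (hp : p.Prime)
    (hpG : p ∣ Nat.card G) (hsq : ¬ p * p ∣ Nat.card G)
    (hsyl : ∀ k, 0 < k → ¬ p * (1 + k * p) ∣ Nat.card G)
    {r s t : ℕ} (hr : ¬ p ∣ r) (hs : ¬ p ∣ s) (ht : ¬ p ∣ t)
    (hr' : r ∣ p + 1) (hs' : s ∣ p + 1)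
    {x y : G} (hx : x ^ r = 1) (hy : y ^ s = 1) (hxy : (x * y) ^ t = 1)
    (hgen : Subgroup.closure {x, y} = ⊤) : False := by
  classical
  have : Fact p.Prime := ⟨hp⟩
  obtain ⟨P⟩ : Nonempty (Sylow p G) := inferInstance
  have hPp : p ∣ Nat.card P := P.dvd_card_of_dvd_card hpG
  have hPcard : Nat.card P = p := by
    obtain ⟨n, hn⟩ := IsPGroup.iff_card.mp P.isPGroup'
    have h2 : n < 2 := by
      by_contra! h2
      exact hsq ((sq p ▸ pow_dvd_pow p h2).trans (hn ▸ Subgroup.card_subgroup_dvd_card _))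
    have h0 : n ≠ 0 := by
      rintro rfl
      rw [pow_zero] at hn
      exact hp.one_lt.ne' (Nat.dvd_one.mp (hn ▸ hPp))
    obtain rfl : n = 1 := by omega
    simpa using hn
  have hone : Nat.card (Sylow p G) = 1 := by
    have h1 := card_sylow_modEq_one p G
    have h2 : p * Nat.card (Sylow p G) ∣ Nat.card G := by
      have := mul_dvd_mul (dvd_of_eq hPcard.symm) P.card_dvd_index
      exact this.trans (dvd_of_eq (P : Subgroup G).card_mul_index)
    have hpos : 0 < Nat.card (Sylow p G) := Nat.card_pos
    obtain ⟨k, hk⟩ := (Nat.modEq_iff_dvd' hpos).mp h1.symm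
    rcases k.eq_zero_or_pos with rfl | hk0
    · omega
    · refine absurd ?_ (hsyl k hk0)
      rwa [show 1 + k * p = Nat.card (Sylow p G) by rw [mul_comm k p]; omega]
  have : Subsingleton (Sylow p G) := (Nat.card_eq_one_iff_unique.mp hone).1
  have hnorm : (P : Subgroup G).Normal := P.normal_of_subsingleton
  have hcyc : IsCyclic P := isCyclic_of_prime_card hPcard
  let e : MulAut P ≃* (ZMod (Nat.card P))ˣ := IsCyclic.mulAutMulEquiv P
  have : Fact (Nat.card P).Prime := ⟨by rwa [hPcard]⟩
  let χ : G →* (ZMod (Nat.card P))ˣ := e.toMonoidHom.comp MulAut.conjNormal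
  obtain ⟨g₀, hg₀⟩ := exists_prime_orderOf_dvd_card' p hPp
  have hg : orderOf (g₀ : G) = p := by rwa [Subgroup.orderOf_coe]
  -- elements in the kernel of the action commute with `g₀`
  have hker : ∀ z, χ z = 1 → ∀ u : G, Commute (u * z * u⁻¹) (g₀ : G) := by
    intro z hz u
    have h1 : χ (u * z * u⁻¹) = 1 := by simp [hz]
    have h2 : MulAut.conjNormal (u * z * u⁻¹) = (1 : MulAut P) := by
      apply e.injective
      rw [map_one]
      exact h1
    have h3 := congrArg Subtype.val (DFunLike.congr_fun h2 g₀)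
    rw [MulAut.conjNormal_apply, MulAut.one_apply] at h3
    exact mul_inv_eq_iff_eq_mul.mp h3
  have hsx := unit_sign (u := χ x) (hPcard.symm ▸ hr') (by rw [← map_pow, hx, map_one])
  have hsy := unit_sign (u := χ y) (hPcard.symm ▸ hs') (by rw [← map_pow, hy, map_one])
  have g1 : Subgroup.closure {y, x} = (⊤ : Subgroup G) := by rw [Set.pair_comm, hgen]
  have g2 : Subgroup.closure {x * y, x} = (⊤ : Subgroup G) := by
    rw [eq_top_iff, ← hgen, Subgroup.closure_le]
    have hx' : x ∈ Subgroup.closure {x * y, x} := Subgroup.subset_closure (by simp)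
    have hxy' : x * y ∈ Subgroup.closure {x * y, x} := Subgroup.subset_closure (by simp)
    rintro v (rfl | hv)
    · exact hx'
    · rw [Set.mem_singleton_iff.mp hv]
      simpa using mul_mem (inv_mem hx') hxy'
  rcases hsx with h1 | h1
  · exact cyclic_quotient_obstruction hp hsq hg (hker x h1) hx hy hr hs hgen
  · rcases hsy with h2 | h2
    · exact cyclic_quotient_obstruction hp hsq hg (hker y h2) hy hx hs hr g1
    · refine cyclic_quotient_obstruction hp hsq hg (hker (x * y) ?_) hxy hx ht hr g2
      rw [map_mul, h1, h2]
      simp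

/-! ### Triangle groups -/

lemma exists_generators {r s t : ℕ} {G : Type} [Group G] {f : TriangleGroup r s t →* G}
    (hf : Function.Surjective f) :
    ∃ x y : G, x ^ r = 1 ∧ y ^ s = 1 ∧ (x * y) ^ t = 1 ∧ Subgroup.closure {x, y} = ⊤ := by
  let g : PresentedGroup (triangleRels r s t) →* G := f
  have hg : Function.Surjective g := hf
  have hrel : ∀ w ∈ triangleRels r s t, g (PresentedGroup.mk _ w) = 1 := fun w hw => by
    rw [PresentedGroup.one_of_mem hw, map_one]
  refine ⟨g (PresentedGroup.of 0), g (PresentedGroup.of 1), ?_, ?_, ?_, ?_⟩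
  · simpa [PresentedGroup.of] using hrel (FreeGroup.of 0 ^ r) (by simp [triangleRels])
  · simpa [PresentedGroup.of] using hrel (FreeGroup.of 1 ^ s) (by simp [triangleRels])
  · rw [← map_mul, ← map_pow]
    exact hrel ((FreeGroup.of 0 * FreeGroup.of 1) ^ t) (by simp [triangleRels])
  · have h := congrArg (Subgroup.map g) (PresentedGroup.closure_range_of (triangleRels r s t))
    rw [MonoidHom.map_closure, ← MonoidHom.range_eq_map, MonoidHom.range_eq_top.mpr hg] at h
    rw [← h]
    congr 1
    ext v
    simp [Fin.exists_fin_two, eq_comm]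

theorem stmt18 (r s t : ℕ) (hr : 0 < r) (hs : 0 < s) (ht : 0 < t) :
    Tendsto (fun x : ℕ => (((quotientOrders r s t ∩ {n | 1 ≤ n ∧ n ≤ x}).ncard : ℝ)) / x)
      atTop (nhds 0) := by
  classical
  set M := r * s * t with hM
  have hMpos : 0 < M := by positivity
  have : NeZero M := ⟨hMpos.ne'⟩
  have hunit : IsUnit (-1 : ZMod M) := isUnit_one.neg
  refine tendsto_order.mpr ⟨fun b hb => Eventually.of_forall fun x => hb.trans_le (by positivity),
    fun ε hε => ?_⟩
  obtain ⟨L, hL⟩ := exists_nat_gt (6 / ε)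
  filter_upwards [prime_sum_large hunit (9 / ε),
    tendsto_log_two.eventually_ge_atTop (max M (max 3 L)), eventually_gt_atTop 0] with x hx hl hx0
  set l := Nat.log 2 x with hl_def
  have hlM : M ≤ l := (le_max_left _ _).trans hl
  have hl3 : 3 ≤ l := (le_max_left _ _).trans ((le_max_right _ _).trans hl)
  have hlL : L ≤ l := (le_max_right _ _).trans ((le_max_right _ _).trans hl)
  set P := (Finset.Ioc (l ^ 2) x).filter (fun p : ℕ => p.Prime ∧ (p : ZMod M) = -1) with hP
  have hSpos : 0 < ∑ p ∈ P, (p : ℝ)⁻¹ := lt_of_lt_of_le (by positivity) hx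
  have hA := turan x P (fun p hp => by
    obtain ⟨h1, h2, _⟩ := Finset.mem_filter.mp hp
    exact ⟨h2, (Finset.mem_Ioc.mp h1).2⟩) hSpos
  have hB := card_bad_le x (l ^ 2) (by positivity)
  set A := (Finset.Ioc 0 x).filter (fun n => ∀ p ∈ P, ¬ p ∣ n)
  set B := (Finset.Ioc 0 x).filter (fun n => ∃ p, l ^ 2 < p ∧
      (p * p ∣ n ∨ ∃ k, 0 < k ∧ p * (1 + k * p) ∣ n))
  have hsub : quotientOrders r s t ∩ {n | 1 ≤ n ∧ n ≤ x} ⊆ ((A ∪ B : Finset ℕ) : Set ℕ) := by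
    rintro n ⟨⟨G, _, _, hG, f, hf⟩, hn1, hn2⟩
    have hn : n ∈ Finset.Ioc 0 x := Finset.mem_Ioc.mpr ⟨hn1, hn2⟩
    by_contra hcon
    rw [Finset.mem_coe, Finset.mem_union, not_or] at hcon
    obtain ⟨hnA, hnB⟩ := hcon
    rw [Finset.mem_filter, not_and] at hnA hnB
    have hnA := hnA hn
    have hnB := hnB hn
    push Not at hnA hnB
    obtain ⟨p, hpP, hpn⟩ := hnA
    obtain ⟨hpI, hp, hpa⟩ := Finset.mem_filter.mp hpP
    have hlp := (Finset.mem_Ioc.mp hpI).1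
    obtain ⟨hsq, hsyl⟩ := hnB p hlp
    have hMp : M ∣ p + 1 := by
      rw [← ZMod.natCast_eq_zero_iff]
      push_cast
      rw [hpa]
      ring
    have hpM : M < p := by nlinarith
    have hndvd : ∀ d, d ∣ M → ¬ p ∣ d := fun d hd h =>
      absurd (Nat.le_of_dvd hMpos (h.trans hd)) (by omega)
    have hrM : r ∣ M := ⟨s * t, by rw [hM, mul_assoc]⟩
    have hsM : s ∣ M := ⟨r * t, by rw [hM]; ring⟩
    have htM : t ∣ M := ⟨r * s, by rw [hM]; ring⟩
    obtain ⟨a, b, ha, hb, hab, hgen⟩ := exists_generators hf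
    subst hG
    exact no_quotient hp hpn hsq hsyl (hndvd r hrM) (hndvd s hsM) (hndvd t htM)
      (hrM.trans hMp) (hsM.trans hMp) ha hb hab hgen
  have hcard : ((quotientOrders r s t ∩ {n | 1 ≤ n ∧ n ≤ x}).ncard : ℝ) ≤ A.card + B.card := by
    have h1 := Set.ncard_le_ncard hsub (Finset.finite_toSet _)
    rw [Set.ncard_coe_finset] at h1
    exact_mod_cast h1.trans (Finset.card_union_le _ _)
  have hx0' : (0 : ℝ) < x := by exact_mod_cast hx0
  have hA' : (A.card : ℝ) ≤ x * (ε / 3) := by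
    refine hA.trans ?_
    rw [div_le_iff₀ hSpos]
    have : ε / 3 * (9 / ε) ≤ ε / 3 * ∑ p ∈ P, (p : ℝ)⁻¹ := by gcongr
    have e : ε / 3 * (9 / ε) = 3 := by field_simp; norm_num
    rw [e] at this
    nlinarith
  have hB' : (B.card : ℝ) ≤ x * (ε / 3) := by
    refine hB.trans ?_
    have h3 : (3 : ℝ) ≤ l := by exact_mod_cast hl3
    have hLl : (L : ℝ) ≤ l := by exact_mod_cast hlL
    have h6 : 6 < l * ε := by
      rw [div_lt_iff₀ hε] at hL
      nlinarith
    refine mul_le_mul_of_nonneg_left ?_ hx0'.le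
    rw [← hl_def]
    push_cast
    rw [div_le_iff₀ (by positivity)]
    nlinarith
  rw [div_lt_iff₀ hx0']
  nlinarith
end
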